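/- For every η ∈ S_{L,M}, the primed arc-count sequence of T_L(η) is the forward shift of the arc-count sequence of η: b̃′(T_L(η))_0 = M and b̃′(T_L(η))_j = b̃(η)_{j−1} for every j ≥ 1. -/

import Mathlib

namespace BBS

attribute [local instance] Classical.propDecidable

noncomputable section

/-- Carrier sequence with initial load `m` for box capacity `L`. -/
def carrierM (L m : ℤ) (η : ℕ → ℤ) : ℕ → ℤ
  | 0 => m
  | j + 1 => η j + max 0 (η j + carrierM L m η j - L)

/-- Carrier sequence (initial load `0`). -/
def carrier (L : ℤ) (η : ℕ → ℤ) : ℕ → ℤ := carrierM L 0 η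

/-- Time evolution `T_L`. -/
def evol (L : ℤ) (η : ℕ → ℤ) (j : ℕ) : ℤ := min (L - η j) (carrier L η j)

/-- Time evolution `T_1^m` on binary sequences. -/
def evolOne (m : ℤ) (w : ℕ → ℤ) (j : ℕ) : ℤ := min (1 - w j) (carrierM 1 m w j)

/-- Membership in `S_{L,M}`. -/
def mem_S (L M : ℤ) (η : ℕ → ℤ) : Prop :=
  (∃ N : ℕ, ∀ j, N ≤ j → η j = 0) ∧
  (∀ j, -M ≤ η j ∧ η j ≤ L + M) ∧
  η 0 ≤ 0 ∧
  (∀ j, max (-η j) (η j - L) ≤ M) ∧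
  (∃ j, max (-η j) (η j - L) = M) ∧
  (∀ i : ℕ, ∑ j ∈ Finset.range (i + 2), η j ≤ ∑ j ∈ Finset.range (i + 1), (L - η j))

/-- Auxiliary sequence for the backward carrier. -/
def backAux (L : ℤ) (η : ℕ → ℤ) (x : ℕ) : ℕ → ℤ
  | 0 => 0
  | n + 1 => η (x - n - 1) + max 0 (η (x - n - 1) + backAux L η x n - L)

/-- Backward carrier `ū` computed from the index `x`. -/
def backCarrier (L : ℤ) (η : ℕ → ℤ) (x j : ℕ) : ℤ :=
  if x ≤ j then 0 else backAux L η x (x - j)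

/-- Reverse time evolution `R_L` computed from the index `x`. -/
def revol (L : ℤ) (η : ℕ → ℤ) (x j : ℕ) : ℤ :=
  if j < x then min (L - η j) (backCarrier L η x (j + 1)) else 0

/-- The concatenated word sequence `r_K(η)`. -/
def rSeq (L M : ℕ) (K : Set ℕ) (η : ℕ → ℤ) (n : ℕ) : ℤ :=
  if (n / (L + 2 * M) ∈ K ∧ ((n % (L + 2 * M) : ℕ) : ℤ) < η (n / (L + 2 * M)) + M) ∨
      (n / (L + 2 * M) ∉ K ∧
        (L : ℤ) + 2 * M - (η (n / (L + 2 * M)) + M) ≤ ((n % (L + 2 * M) : ℕ) : ℤ))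
  then 1 else 0

/-- The concatenated word sequence `l_K(η)`. -/
def lSeq (L M : ℕ) (K : Set ℕ) (η : ℕ → ℤ) (n : ℕ) : ℤ :=
  if (n / (L + 2 * M) ∈ K ∧
        (L : ℤ) + 2 * M - (η (n / (L + 2 * M)) + M) ≤ ((n % (L + 2 * M) : ℕ) : ℤ)) ∨
      (n / (L + 2 * M) ∉ K ∧ ((n % (L + 2 * M) : ℕ) : ℤ) < η (n / (L + 2 * M)) + M)
  then 1 else 0

/-- Soliton flag sequence `a(η)`. -/
def flag (L : ℤ) (η : ℕ → ℤ) : ℕ → ℤ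
  | 0 => 0
  | j + 1 =>
    if η j + η (j + 1) < L then 0
    else if η j + η (j + 1) = L then flag L η j else 1

/-- Primed soliton flag sequence `a′(η)` (with the convention `a′_{-1} = 0`). -/
def flag' (L : ℤ) (η : ℕ → ℤ) : ℕ → ℤ
  | 0 => if η 0 + η 1 < L then 0 else if η 0 + η 1 = L then 0 else 1
  | j + 1 =>
    if η (j + 1) + η (j + 2) < L then 0
    else if η (j + 1) + η (j + 2) = L then flag' L η j else 1

/-- `I(η)`: right ends of contiguous 1-segments. -/
def Iset (L : ℤ) (η : ℕ → ℤ) : Set ℕ := {j | flag L η j = 1 ∧ flag L η (j + 1) = 0}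

/-- `I′(η)`: left ends of contiguous right-1-segments. -/
def Iset' (L : ℤ) (η : ℕ → ℤ) : Set ℕ :=
  {j | (∀ k, j = k + 1 → flag' L η k = 0) ∧ flag' L η j = 1}

def marked (L : ℤ) (η : ℕ → ℤ) (j : ℕ) : Prop := j ∈ Iset L η ∨ j + 1 ∈ Iset L η

def marked' (L : ℤ) (η : ℕ → ℤ) (j : ℕ) : Prop :=
  j ∈ Iset' L η ∨ ∃ k, j = k + 1 ∧ k ∈ Iset' L η

/-- Arc-count sequence `b̃(η)`. -/
def btilde (L M : ℕ) (η : ℕ → ℤ) (j : ℕ) : ℤ :=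
  if marked (L : ℤ) η j then 0
  else min (η j + M) ((L : ℤ) + 2 * M - (η (j + 1) + M))

/-- `b̃_{j-1}` with the convention `b̃_{-1} = 0`. -/
def bprev (L M : ℕ) (η : ℕ → ℤ) : ℕ → ℤ
  | 0 => 0
  | j + 1 => btilde L M η j

/-- Primed arc-count sequence `b̃′(η)`. -/
def btilde' (L M : ℕ) (η : ℕ → ℤ) : ℕ → ℤ
  | 0 => if marked' (L : ℤ) η 0 then 0 else η 0 + M
  | j + 1 =>
    if marked' (L : ℤ) η (j + 1) then 0
    else min (η (j + 1) + M) ((L : ℤ) + 2 * M - (η j + M))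

/-- Background sequence `c(η)`: subsequence of `b̃` on unmarked indices, lowered by `M`. -/
def bg (L M : ℕ) (η : ℕ → ℤ) (j : ℕ) : ℤ :=
  btilde L M η (Nat.nth (fun i => ¬ marked (L : ℤ) η i) j) - M

/-- Primed background sequence `c′(η)`. -/
def bg' (L M : ℕ) (η : ℕ → ℤ) (j : ℕ) : ℤ :=
  btilde' L M η (Nat.nth (fun i => ¬ marked' (L : ℤ) η i) j) - M

/-- Length of the word corresponding to box `j` in `d̃(η)`. -/
def wordLen (L M : ℕ) (η : ℕ → ℤ) (j : ℕ) : ℕ :=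
  if j ∈ Iset (L : ℤ) η then L + 2 * M
  else ((L : ℤ) + 2 * M - bprev L M η j - btilde L M η j).toNat

def wordStart (L M : ℕ) (η : ℕ → ℤ) (j : ℕ) : ℕ :=
  ∑ k ∈ Finset.range j, wordLen L M η k

/-- Raised soliton word sequence `d̃(η)`. -/
def dTilde (L M : ℕ) (η : ℕ → ℤ) (n : ℕ) : ℤ :=
  if ∃ j, wordStart L M η j ≤ n ∧ n < wordStart L M η (j + 1) ∧
      ((j ∈ Iset (L : ℤ) η ∧ ((n - wordStart L M η j : ℕ) : ℤ) < η j + M) ∨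
        (j ∉ Iset (L : ℤ) η ∧
          (L : ℤ) + 2 * M - (η j + M) - bprev L M η j ≤ ((n - wordStart L M η j : ℕ) : ℤ)))
  then 1 else 0

/-- Length of the word corresponding to box `j` in `d̃′(η)`. -/
def wordLen' (L M : ℕ) (η : ℕ → ℤ) (j : ℕ) : ℕ :=
  if j ∈ Iset' (L : ℤ) η then L + 2 * M
  else ((L : ℤ) + 2 * M - btilde' L M η j - btilde' L M η (j + 1)).toNat

def wordStart' (L M : ℕ) (η : ℕ → ℤ) (j : ℕ) : ℕ :=
  ∑ k ∈ Finset.range j, wordLen' L M η k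

/-- Primed raised soliton word sequence `d̃′(η)`. -/
def dTilde' (L M : ℕ) (η : ℕ → ℤ) (n : ℕ) : ℤ :=
  if ∃ j, wordStart' L M η j ≤ n ∧ n < wordStart' L M η (j + 1) ∧
      ((j ∈ Iset' (L : ℤ) η ∧
          (L : ℤ) + 2 * M - (η j + M) ≤ ((n - wordStart' L M η j : ℕ) : ℤ)) ∨
        (j ∉ Iset' (L : ℤ) η ∧
          ((n - wordStart' L M η j : ℕ) : ℤ) < η j + M - btilde' L M η j))
  then 1 else 0

/-- The sequence `0^{s 1}1^{t 1}0^{s 2}1^{t 2}⋯0^{s N}1^{t N}0^∞`. -/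
def runSeq (N : ℕ) (s t : ℕ → ℕ) (n : ℕ) : ℤ :=
  if ∃ m, 1 ≤ m ∧ m ≤ N ∧
      (∑ k ∈ Finset.Icc 1 (m - 1), (s k + t k)) + s m ≤ n ∧
      n < ∑ k ∈ Finset.Icc 1 m, (s k + t k)
  then 1 else 0

/-- `w = 0^{s 1}1^{t 1}⋯1^{t N}0^∞` is the (maximal) run decomposition of `w`. -/
def IsRunDecomp (N : ℕ) (s t : ℕ → ℕ) (w : ℕ → ℤ) : Prop :=
  (∀ m, 1 ≤ m → m ≤ N → 1 ≤ t m) ∧ (∀ m, 2 ≤ m → m ≤ N → 1 ≤ s m) ∧ w = runSeq N s t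

def shrinkS (M : ℕ) (s : ℕ → ℕ) (m : ℕ) : ℕ := if m = 1 then s 1 - M else s m - 2 * M

def shrinkT (M : ℕ) (t : ℕ → ℕ) (m : ℕ) : ℕ := t m - 2 * M

/-- `d` is the soliton sequence `d(η)`. -/
def IsSolitonSeq (L M : ℕ) (η : ℕ → ℤ) (d : ℕ → ℤ) : Prop :=
  ∃ N s t, IsRunDecomp N s t (dTilde L M η) ∧ d = runSeq N (shrinkS M s) (shrinkT M t)

/-- `d` is the primed soliton sequence `d′(η)`. -/
def IsSolitonSeq' (L M : ℕ) (η : ℕ → ℤ) (d : ℕ → ℤ) : Prop :=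
  ∃ N s t, IsRunDecomp N s t (dTilde' L M η) ∧ d = runSeq N (shrinkS M s) (shrinkT M t)

/-- Forward shift `Λ`. -/
def lam (c : ℕ → ℤ) : ℕ → ℤ
  | 0 => 0
  | j + 1 => c j

/-- Membership in the background space `S^{(b)}_{L,M}`. -/
def mem_Sb (L M : ℤ) (c : ℕ → ℤ) : Prop := mem_S L M c ∧ ∀ j, c j + c (j + 1) ≤ L

/-- Membership in the soliton space `S^{(f)}_L`: a binary sequence with finitely many
ones all of whose maximal runs of equal letters have length greater than `L`. -/
def mem_Sf (L : ℕ) (w : ℕ → ℤ) : Prop :=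
  (∀ n, w n = 0 ∨ w n = 1) ∧ (∃ N : ℕ, ∀ n, N ≤ n → w n = 0) ∧
  ∀ n m : ℕ, n ≤ m → (∀ j, n ≤ j → j ≤ m → w j = w n) →
    (n = 0 ∨ w (n - 1) ≠ w n) → w (m + 1) ≠ w m → L < m + 1 - n

/-- Stages of the iterative arc-pairing construction: at each stage, connect every pair
`i < j` of yet-unpaired positions with `w i = a`, `w j = b` such that every position
strictly between them is already paired. -/
def arcStage (a b : ℤ) (w : ℕ → ℤ) : ℕ → Set (ℕ × ℕ)
  | 0 => ∅
  | k + 1 => arcStage a b w k ∪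
      {p : ℕ × ℕ | p.1 < p.2 ∧ w p.1 = a ∧ w p.2 = b ∧
        (∀ q ∈ arcStage a b w k, p.1 ≠ q.1 ∧ p.1 ≠ q.2 ∧ p.2 ≠ q.1 ∧ p.2 ≠ q.2) ∧
        (∀ m, p.1 < m → m < p.2 → ∃ q ∈ arcStage a b w k, m = q.1 ∨ m = q.2)}

/-- The arc pairing: `arcPairing 1 0 w` is the 10-arc pairing of `w`, and
`arcPairing 0 1 w` is the 01-arc pairing of `w`. -/
def arcPairing (a b : ℤ) (w : ℕ → ℤ) : Set (ℕ × ℕ) := ⋃ k, arcStage a b w k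

/-- Extension of `η` to integer indices with `η_j = L` for `j < 0`. -/
def etaExt (L : ℕ) (η : ℕ → ℤ) (j : ℤ) : ℤ := if j < 0 then (L : ℤ) else η j.toNat

end

end BBS

open BBS

/-- Previous primed flag, with the convention that it is `0` at index `0`. -/
def flagPrev (L : ℤ) (η : ℕ → ℤ) : ℕ → ℤ
  | 0 => 0
  | j + 1 => flag' L η j

theorem flag'_eq (L : ℤ) (η : ℕ → ℤ) (j : ℕ) :
    flag' L η j = if η j + η (j + 1) < L then 0
      else if η j + η (j + 1) = L then flagPrev L η j else 1 := by
  cases j <;> rfl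

theorem flag_succ (L : ℤ) (η : ℕ → ℤ) (j : ℕ) :
    flag L η (j + 1) = if η j + η (j + 1) < L then 0
      else if η j + η (j + 1) = L then flag L η j else 1 := rfl

theorem carrier_succ (L : ℤ) (η : ℕ → ℤ) (j : ℕ) :
    carrier L η (j + 1) = η j + max 0 (η j + carrier L η j - L) := rfl

/-- Invariant relating the flags of `η` and the primed flags of `T_L(η)`. -/
theorem flag_inv (L : ℤ) (η : ℕ → ℤ) (h0 : η 0 ≤ L) (j : ℕ) :
    (flag L η j = 0 ∨ flag L η j = 1) ∧
    (flagPrev L (evol L η) j = 0 ∨ flagPrev L (evol L η) j = 1) ∧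
    (flag L η j = 1 → 0 < η j + carrier L η j - L) ∧
    (0 < η j + carrier L η j - L → flagPrev L (evol L η) j = 1 - flag L η j) := by
  induction j with
  | zero =>
    have : carrier L η 0 = 0 := rfl
    simp only [flag, flagPrev, this]
    refine ⟨by simp, by simp, by simp, fun h => ?_⟩
    omega
  | succ j ih =>
    have hf := flag_succ L η j
    have hf' : flagPrev L (evol L η) (j + 1) = _ := flag'_eq L (evol L η) j
    have hc := carrier_succ L η j
    have e1 : evol L η j = min (L - η j) (carrier L η j) := rfl
    have e2 : evol L η (j + 1) = min (L - η (j + 1)) (carrier L η (j + 1)) := rfl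
    obtain ⟨i1, i2, i3, i4⟩ := ih
    split_ifs at hf hf' <;> refine ⟨?_, ?_, ?_, ?_⟩ <;> omega

theorem Iset_eq (L : ℤ) (η : ℕ → ℤ) (h0 : η 0 ≤ L) (j : ℕ) :
    j ∈ Iset' L (evol L η) ↔ j ∈ Iset L η := by
  have key : j ∈ Iset' L (evol L η) ↔
      flagPrev L (evol L η) j = 0 ∧ flag' L (evol L η) j = 1 := by
    cases j <;> simp [Iset', flagPrev]
  rw [key]
  change _ ↔ flag L η j = 1 ∧ flag L η (j + 1) = 0
  obtain ⟨i1, i2, i3, i4⟩ := flag_inv L η h0 j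
  have hf := flag_succ L η j
  have hf' := flag'_eq L (evol L η) j
  have hc := carrier_succ L η j
  have e1 : evol L η j = min (L - η j) (carrier L η j) := rfl
  have e2 : evol L η (j + 1) = min (L - η (j + 1)) (carrier L η (j + 1)) := rfl
  split_ifs at hf hf' <;> omega

/-- the primed arc-count sequence of `T_L(η)` is the forward shift of the
arc-count sequence of `η`. -/
theorem stmt_9 (L M : ℕ) (hL : 1 ≤ L) (η : ℕ → ℤ) (hη : mem_S L M η) :
    btilde' L M (evol L η) 0 = M ∧
    (∀ j : ℕ, btilde' L M (evol L η) (j + 1) = btilde L M η j) := by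
  have h0 : η 0 ≤ (L : ℤ) := by have := hη.2.2.1; omega
  constructor
  · have hm : ¬ marked' (L : ℤ) (evol L η) 0 := by
      rintro (h | ⟨k, hk, -⟩)
      · rw [Iset_eq _ _ h0] at h
        have := h.1
        simp [flag] at this
      · omega
    have : evol L η 0 = min (L - η 0) 0 := rfl
    simp only [btilde', if_neg hm]
    omega
  · intro j
    have hm : marked' (L : ℤ) (evol L η) (j + 1) ↔ marked (L : ℤ) η j := by
      unfold marked marked'
      rw [Iset_eq _ _ h0]
      constructor
      · rintro (h | ⟨k, hk, h⟩)
        · exact Or.inr h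
        · obtain rfl : j = k := by omega
          exact Or.inl ((Iset_eq _ _ h0 _).1 h)
      · rintro (h | h)
        · exact Or.inr ⟨j, rfl, (Iset_eq _ _ h0 _).2 h⟩
        · exact Or.inl h
    have hc := carrier_succ L η j
    have e1 : evol L η j = min (L - η j) (carrier L η j) := rfl
    have e2 : evol L η (j + 1) = min (L - η (j + 1)) (carrier L η (j + 1)) := rfl
    by_cases h : marked (L : ℤ) η j
    · simp only [btilde', btilde, if_pos h, if_pos (hm.2 h)]
    · simp only [btilde', btilde, if_neg h, if_neg (fun h' => h (hm.1 h'))]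
      omega
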